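/- arXiv:0812.4105 — 2 statements merged into one kernel-verified Lean document; each statement's English description precedes it below -/
import Mathlib

section
/- Let X ~ F and Z ~ Beta(a, b) (a, b > 0) be independent random variables with F(0) = 0, upper endpoint x_F = 1, and F in the max-domain of attraction of Ψ_γ (γ ∈ (0,∞)), and let Y := X (1 − δZ)^τ with δ ∈ (0, 1] and τ ∈ (0, ∞). Then P(Y > u) = (1+o(1)) (Γ(γ+1)Γ(a+b)/(Γ(b)Γ(γ+a+1))) · ((1−u)/(τδ))^{a} · (1 − F(u)) as u ↑ 1. -/
open MeasureTheory Filter Topology Matrix ProbabilityTheory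

noncomputable section

/-- The Euclidean norm of a vector in `ℝ^d`. -/
def eNorm {d : ℕ} (x : Fin d → ℝ) : ℝ := Real.sqrt (∑ i, x i ^ 2)

/-- `U` is uniformly distributed on the unit sphere of `ℝ^d`: it takes values in the unit
sphere and its distribution is invariant under orthogonal transformations. -/
def IsUniformOnSphere {Ω : Type*} [MeasurableSpace Ω] (P : Measure Ω) {d : ℕ}
    (U : Ω → Fin d → ℝ) : Prop :=
  Measurable U ∧ (∀ ω, eNorm (U ω) = 1) ∧
    ∀ D : Matrix (Fin d) (Fin d) ℝ, D * Dᵀ = 1 →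
      P.map (fun ω => D.mulVec (U ω)) = P.map U

/-- The density of the Beta distribution with parameters `a, b`. -/
def betaPDF (a b x : ℝ) : ℝ :=
  if 0 < x ∧ x < 1 then
    x ^ (a - 1) * (1 - x) ^ (b - 1) * (Real.Gamma (a + b) / (Real.Gamma a * Real.Gamma b))
  else 0

/-!
Only the behaviour `f z ~ c z ^ (a - 1)` at `0` of the density `f` of `Z` matters, because for `u`
close to `1` the event `X (1 - δ Z) ^ τ > u` forces `Z` to be of order `1 - u`. Conditioning on `Z`
gives `P (Y > u) = ∫ P (X > u / (1 - δ z) ^ τ) f z dz`. With `e = 1 - u` and `z = e w / (τ δ)` the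
threshold for `X` is `1 - e (1 - w + o(1))`, so by regular variation the integrand, divided by
`(e / (τ δ)) ^ (a - 1) * (1 - F u)`, tends to `c w ^ (a - 1) (1 - w) ^ γ` on `(0, 1)` and to `0`
elsewhere. Since `(1 - x) ^ (-τ) ≥ 1 + τ x`, it vanishes for `w > 2` once `e ≤ 1 / 2`, and dominated
convergence produces the Beta integral `c B(a, γ + 1)`.
-/

/-- `G` is regularly varying at `0` from the right, with index `γ`. The max-domain of attraction
of `Ψ_γ` with endpoint `1` is this property for `t ↦ 1 - F (1 - t)`. -/
def IsRegularlyVaryingAtZero (G : ℝ → ℝ) (γ : ℝ) : Prop :=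
  ∀ x, 0 < x → Tendsto (fun e => G (x * e) / G e) (𝓝[>] 0) (𝓝 (x ^ γ))

namespace IsRegularlyVaryingAtZero

variable {G : ℝ → ℝ} {γ : ℝ}

lemma index_nonneg (hG : IsRegularlyVaryingAtZero G γ) (hmono : Monotone G)
    (hpos : ∀ t, 0 < t → 0 < G t) : 0 ≤ γ := by
  have one_le : (1 : ℝ) ≤ 2 ^ γ := by
    refine ge_of_tendsto (hG 2 two_pos) ?_
    filter_upwards [self_mem_nhdsWithin] with e (he : 0 < e)
    exact (one_le_div (hpos e he)).2 (hmono (by linarith))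
  rwa [← Real.rpow_zero 2, Real.rpow_le_rpow_left_iff one_lt_two] at one_le

lemma tendsto_div_of_tendsto (hG : IsRegularlyVaryingAtZero G γ) (hmono : Monotone G)
    (hpos : ∀ t, 0 < t → 0 < G t) {h : ℝ → ℝ} {x : ℝ} (hx : 0 < x)
    (hh : Tendsto h (𝓝[>] 0) (𝓝 x)) :
    Tendsto (fun e => G (h e * e) / G e) (𝓝[>] 0) (𝓝 (x ^ γ)) := by
  have rpow_tendsto : Tendsto (fun y : ℝ => y ^ γ) (𝓝 x) (𝓝 (x ^ γ)) :=
    Real.continuousAt_rpow_const _ _ (Or.inl hx.ne')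
  have div_le_div {y z e : ℝ} (he : 0 < e) (hyz : y ≤ z) : G (y * e) / G e ≤ G (z * e) / G e :=
    div_le_div_of_nonneg_right (hmono (by gcongr)) (hpos e he).le
  refine tendsto_order.2 ⟨fun l hl => ?_, fun l hl => ?_⟩
  · obtain ⟨y, ⟨hly, hy⟩, hyx : y < x⟩ :=
      (((rpow_tendsto.eventually_const_lt hl).and (lt_mem_nhds hx)).filter_mono
        nhdsWithin_le_nhds |>.and (self_mem_nhdsWithin (s := Set.Iio x))).exists
    filter_upwards [self_mem_nhdsWithin, (hG y hy).eventually_const_lt hly,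
      hh.eventually_const_lt hyx] with e he hle hye
    exact hle.trans_le (div_le_div he hye.le)
  · obtain ⟨y, hyl, hxy : x < y⟩ :=
      ((rpow_tendsto.eventually_lt_const hl).filter_mono
        nhdsWithin_le_nhds |>.and (self_mem_nhdsWithin (s := Set.Ioi x))).exists
    filter_upwards [self_mem_nhdsWithin, (hG y (hx.trans hxy)).eventually_lt_const hyl,
      hh.eventually_lt_const hxy] with e he hle hye
    exact (div_le_div he hye.le).trans_lt hle

end IsRegularlyVaryingAtZero

lemma one_add_mul_le_inv_one_sub_rpow {τ x : ℝ} (hτ : 0 ≤ τ) (hx : x < 1) :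
    1 + τ * x ≤ ((1 - x) ^ τ)⁻¹ := by
  have hpos : 0 < 1 - x := sub_pos.2 hx
  calc 1 + τ * x ≤ Real.exp (τ * x) := by linarith [Real.add_one_le_exp (τ * x)]
    _ = (Real.exp (-x) ^ τ)⁻¹ := by rw [← Real.exp_mul, ← Real.exp_neg]; ring_nf
    _ ≤ ((1 - x) ^ τ)⁻¹ :=
      inv_anti₀ (Real.rpow_pos_of_pos hpos τ)
        (Real.rpow_le_rpow hpos.le (Real.one_sub_le_exp_neg x) hτ)

/-- For `u = 1 - e` and `δ z = e w / τ`, the event `X (1 - δ z) ^ τ > u` is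
`X > 1 - e * rescaledGap τ e w`: the distance of the threshold for `X` to the endpoint `1`, measured
in units of `e`. The scale of `z` is chosen so that the limit as `e → 0` is `1 - w`. -/
def rescaledGap (τ e w : ℝ) : ℝ := (1 - (1 - e) / (1 - e * w / τ) ^ τ) / e

lemma measurable_rescaledGap (τ e : ℝ) : Measurable (rescaledGap τ e) := by
  unfold rescaledGap
  fun_prop

lemma tendsto_rescaledGap {τ : ℝ} (hτ : τ ≠ 0) (w : ℝ) :
    Tendsto (fun e => rescaledGap τ e w) (𝓝[>] 0) (𝓝 (1 - w)) := by
  have hbase : HasDerivAt (fun e : ℝ => 1 - e * w / τ) (-(w / τ)) 0 := by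
    simpa using (((hasDerivAt_id (0 : ℝ)).mul_const w).div_const τ).const_sub 1
  have hnum : HasDerivAt (fun e : ℝ => 1 - e) (-1) 0 := (hasDerivAt_id (0 : ℝ)).const_sub 1
  have hderiv : HasDerivAt (fun e : ℝ => 1 - (1 - e) / (1 - e * w / τ) ^ τ) (1 - w) 0 := by
    refine ((hnum.div (hbase.rpow_const (p := τ) (Or.inl (by simp)))
      (by simp)).const_sub 1).congr_deriv ?_
    simp only [zero_mul, zero_div, sub_zero, Real.one_rpow]
    field_simp
    ring
  refine hderiv.tendsto_slope_zero_right.congr fun e => ?_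
  simp [rescaledGap, div_eq_inv_mul]

lemma rescaledGap_le {τ e w : ℝ} (hτ : 0 < τ) (he : 0 < e) (he1 : e ≤ 1) (hw : e * w / τ < 1) :
    rescaledGap τ e w ≤ 1 - (1 - e) * w := by
  have key := mul_le_mul_of_nonneg_left (one_add_mul_le_inv_one_sub_rpow hτ.le hw)
    (sub_nonneg.2 he1)
  rw [mul_div_cancel₀ _ hτ.ne', ← div_eq_mul_inv] at key
  rw [rescaledGap, div_le_iff₀ he]
  linarith

lemma tendsto_mul_const_nhdsGT_zero {k : ℝ} (hk : 0 < k) :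
    Tendsto (fun x => x * k) (𝓝[>] 0) (𝓝[>] 0) := by
  simpa only [zero_mul, id] using TendstoNhdsWithinIoi.mul_const hk (tendsto_id (x := 𝓝[>] 0))

lemma tendsto_div_const_nhdsGT_zero {k : ℝ} (hk : 0 < k) :
    Tendsto (fun x => x / k) (𝓝[>] 0) (𝓝[>] 0) := by
  simpa only [div_eq_mul_inv] using tendsto_mul_const_nhdsGT_zero (inv_pos.2 hk)

lemma tendsto_sub_left_nhdsLT (x : ℝ) : Tendsto (fun u => x - u) (𝓝[<] x) (𝓝[>] 0) := by
  have hcont : Tendsto (fun u => x - u) (𝓝 x) (𝓝 0) := by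
    simpa using (continuous_sub_left x).tendsto x
  refine tendsto_nhdsWithin_iff.2 ⟨hcont.mono_left nhdsWithin_le_nhds, ?_⟩
  filter_upwards [self_mem_nhdsWithin] with u (hu : u < x) using sub_pos.2 hu

section Density

variable {f : ℝ → ℝ} {p c : ℝ}

lemma tendsto_comp_mul_div_rpow (hf : Tendsto (fun z => f z / z ^ p) (𝓝[>] 0) (𝓝 c))
    {w : ℝ} (hw : 0 < w) :
    Tendsto (fun s => f (s * w) / s ^ p) (𝓝[>] 0) (𝓝 (c * w ^ p)) := by
  refine ((hf.comp (tendsto_mul_const_nhdsGT_zero hw)).mul_const (w ^ p)).congr' ?_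
  filter_upwards [self_mem_nhdsWithin] with s (hs : 0 < s)
  have := (Real.rpow_pos_of_pos hw p).ne'
  rw [Function.comp_apply, Real.mul_rpow hs.le hw.le]
  field_simp

lemma eventually_comp_mul_div_rpow_le (hf : Tendsto (fun z => f z / z ^ p) (𝓝[>] 0) (𝓝 c))
    {M : ℝ} (hM : 0 < M) :
    ∀ᶠ s in 𝓝[>] 0, ∀ w ∈ Set.Ioc 0 M, f (s * w) / s ^ p ≤ (c + 1) * w ^ p := by
  obtain ⟨r, hr : 0 < r, hbound⟩ :=
    mem_nhdsGT_iff_exists_Ioo_subset.1 (hf.eventually_le_const (lt_add_one c))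
  filter_upwards [Ioo_mem_nhdsGT (div_pos hr hM)] with s ⟨hs, hsr⟩ w ⟨hw, hwM⟩
  have hsw : s * w < r := (mul_le_mul_of_nonneg_left hwM hs.le).trans_lt ((lt_div_iff₀ hM).1 hsr)
  have key : f (s * w) / (s * w) ^ p ≤ c + 1 := hbound ⟨mul_pos hs hw, hsw⟩
  rw [div_le_iff₀ (by positivity), Real.mul_rpow hs.le hw.le] at key
  rw [div_le_iff₀ (by positivity)]
  linarith

end Density

lemma integral_Ioo_rpow_mul_one_sub_rpow {α β : ℝ} (hα : 0 < α) (hβ : 0 < β) :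
    ∫ x in Set.Ioo (0 : ℝ) 1, x ^ (α - 1) * (1 - x) ^ (β - 1) = beta α β := by
  have hone := lintegral_betaPDF_eq_one hα hβ
  rw [lintegral_betaPDF, ← ENNReal.toReal_eq_one_iff, ← integral_eq_lintegral_of_nonneg_ae] at hone
  · simp_rw [mul_assoc, integral_const_mul] at hone
    exact (eq_of_div_eq_one (by rwa [div_eq_inv_mul, ← one_div]))
  · refine ae_restrict_of_forall_mem measurableSet_Ioo fun x hx => ?_
    have := beta_pos hα hβ
    have := Real.rpow_nonneg (sub_nonneg.2 hx.2.le) (β - 1)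
    have := Real.rpow_nonneg hx.1.le (α - 1)
    dsimp
    positivity
  · exact Measurable.aestronglyMeasurable (by fun_prop)

/-- The normalised integrand of `P (X (1 - δ Z) ^ τ > 1 - e)` after the substitution
`z = e / (τ δ) * w`, where `f` is the density of `Z` and `G t = P (X > 1 - t)`. -/
def rescaledIntegrand (G f : ℝ → ℝ) (a δ τ e w : ℝ) : ℝ :=
  G (rescaledGap τ e w * e) / G e * (f (e / (τ * δ) * w) / (e / (τ * δ)) ^ (a - 1))

section RescaledIntegrand

variable {G f : ℝ → ℝ} {a c γ δ τ e w : ℝ}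

lemma integral_rescaledIntegrand (hδ : 0 < δ) (hτ : 0 < τ) (he : 0 < e) :
    ∫ w, rescaledIntegrand G f a δ τ e w =
      (∫ z, G (1 - (1 - e) / (1 - δ * z) ^ τ) * f z) / ((e / (τ * δ)) ^ a * G e) := by
  have hs : 0 < e / (τ * δ) := by positivity
  have hintegrand : ∀ w, rescaledIntegrand G f a δ τ e w =
      (fun z => G (1 - (1 - e) / (1 - δ * z) ^ τ) * f z) (e / (τ * δ) * w) *
        (G e * (e / (τ * δ)) ^ (a - 1))⁻¹ := fun w => by
    have hδs : δ * (e / (τ * δ) * w) = e * w / τ := by field_simp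
    simp only [rescaledIntegrand, rescaledGap, div_mul_cancel₀ _ he.ne', hδs]
    ring
  simp_rw [hintegrand]
  rw [integral_mul_const, Measure.integral_comp_mul_left
      (fun z => G (1 - (1 - e) / (1 - δ * z) ^ τ) * f z), smul_eq_mul, abs_of_pos (inv_pos.2 hs),
    Real.rpow_sub_one hs.ne']
  field_simp

lemma mul_div_lt_one_of_mem_support (hδ : 0 < δ) (hτ : 0 < τ)
    (hf_supp : Function.support f ⊆ Set.Ioo 0 (1 / δ)) (hw : f (e / (τ * δ) * w) ≠ 0) :
    e * w / τ < 1 := by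
  calc e * w / τ = δ * (e / (τ * δ) * w) := by field_simp
    _ < 1 := (lt_div_iff₀' hδ).1 (hf_supp hw).2

lemma rescaledIntegrand_nonneg (hG_nonneg : ∀ t, 0 ≤ G t) (hf_nonneg : ∀ z, 0 ≤ f z)
    (hδ : 0 < δ) (hτ : 0 < τ) (he : 0 < e) : 0 ≤ rescaledIntegrand G f a δ τ e w :=
  mul_nonneg (div_nonneg (hG_nonneg _) (hG_nonneg _)) (div_nonneg (hf_nonneg _) (by positivity))

lemma rescaledIntegrand_le (hmono : Monotone G) (hpos : ∀ t, 0 < t → 0 < G t)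
    (hf_nonneg : ∀ z, 0 ≤ f z) (hf_supp : Function.support f ⊆ Set.Ioo 0 (1 / δ))
    (hδ : 0 < δ) (hτ : 0 < τ) (he : 0 < e) (he1 : e ≤ 1) (hw : 0 ≤ w) :
    rescaledIntegrand G f a δ τ e w ≤ f (e / (τ * δ) * w) / (e / (τ * δ)) ^ (a - 1) := by
  rcases eq_or_ne (f (e / (τ * δ) * w)) 0 with hf0 | hf0
  · simp [rescaledIntegrand, hf0]
  have hgap : rescaledGap τ e w ≤ 1 :=
    (rescaledGap_le hτ he he1 (mul_div_lt_one_of_mem_support hδ hτ hf_supp hf0)).trans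
      (sub_le_self _ (mul_nonneg (sub_nonneg.2 he1) hw))
  refine mul_le_of_le_one_left (div_nonneg (hf_nonneg _) (by positivity)) ?_
  exact (div_le_one (hpos e he)).2 (hmono (mul_le_of_le_one_left he.le hgap))

lemma rescaledIntegrand_eq_zero (hzero : ∀ t ≤ 0, G t = 0)
    (hf_supp : Function.support f ⊆ Set.Ioo 0 (1 / δ)) (hδ : 0 < δ) (hτ : 0 < τ) (he : 0 < e)
    (he2 : e ≤ 1 / 2) (hw : w ∉ Set.Ioc 0 2) : rescaledIntegrand G f a δ τ e w = 0 := by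
  rcases eq_or_ne (f (e / (τ * δ) * w)) 0 with hf0 | hf0
  · simp [rescaledIntegrand, hf0]
  have hw0 : 0 < w := pos_of_mul_pos_right (hf_supp hf0).1 (by positivity)
  have hw2 : 2 < w := not_le.1 fun h => hw ⟨hw0, h⟩
  have hgap : rescaledGap τ e w ≤ 0 := by
    have := rescaledGap_le hτ he (by linarith)
      (mul_div_lt_one_of_mem_support hδ hτ hf_supp hf0)
    nlinarith
  simp [rescaledIntegrand, hzero _ (mul_nonpos_of_nonpos_of_nonneg hgap he.le)]

lemma eventually_norm_rescaledIntegrand_le (hmono : Monotone G) (hzero : ∀ t ≤ 0, G t = 0)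
    (hpos : ∀ t, 0 < t → 0 < G t) (hf_nonneg : ∀ z, 0 ≤ f z)
    (hf_supp : Function.support f ⊆ Set.Ioo 0 (1 / δ))
    (hf : Tendsto (fun z => f z / z ^ (a - 1)) (𝓝[>] 0) (𝓝 c)) (hδ : 0 < δ) (hτ : 0 < τ) :
    ∀ᶠ e in 𝓝[>] 0, ∀ w, ‖rescaledIntegrand G f a δ τ e w‖ ≤
      (Set.Ioc 0 2).indicator (fun w => (c + 1) * w ^ (a - 1)) w := by
  have hG_nonneg (t : ℝ) : 0 ≤ G t :=
    (le_total t 0).elim (fun ht => (hzero t ht).ge) fun ht => (hzero 0 le_rfl).ge.trans (hmono ht)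
  filter_upwards [Ioc_mem_nhdsGT (one_half_pos (α := ℝ)),
    (tendsto_div_const_nhdsGT_zero (mul_pos hτ hδ)).eventually
      (eventually_comp_mul_div_rpow_le hf two_pos)]
    with e ⟨he, he2⟩ hdensity w
  by_cases hw : w ∈ Set.Ioc 0 2
  · rw [Set.indicator_of_mem hw,
      Real.norm_of_nonneg (rescaledIntegrand_nonneg hG_nonneg hf_nonneg hδ hτ he)]
    exact (rescaledIntegrand_le hmono hpos hf_nonneg hf_supp hδ hτ he (by linarith) hw.1.le).trans
      (hdensity w hw)
  · rw [Set.indicator_of_notMem hw, rescaledIntegrand_eq_zero hzero hf_supp hδ hτ he he2 hw,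
      norm_zero]

lemma tendsto_rescaledIntegrand (hG : IsRegularlyVaryingAtZero G γ) (hmono : Monotone G)
    (hzero : ∀ t ≤ 0, G t = 0) (hpos : ∀ t, 0 < t → 0 < G t)
    (hf_supp : Function.support f ⊆ Set.Ioo 0 (1 / δ))
    (hf : Tendsto (fun z => f z / z ^ (a - 1)) (𝓝[>] 0) (𝓝 c)) (hδ : 0 < δ) (hτ : 0 < τ)
    (hw : w ≠ 1) :
    Tendsto (fun e => rescaledIntegrand G f a δ τ e w) (𝓝[>] 0)
      (𝓝 ((Set.Ioo 0 1).indicator (fun w => c * (w ^ (a - 1) * (1 - w) ^ γ)) w)) := by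
  have hgap := tendsto_rescaledGap hτ.ne' w
  rcases le_or_gt w 0 with hw0 | hw0
  · rw [Set.indicator_of_notMem fun h => h.1.not_ge hw0]
    refine tendsto_const_nhds.congr' ?_
    filter_upwards [self_mem_nhdsWithin] with e (he : 0 < e)
    have hf0 : f (e / (τ * δ) * w) = 0 := by
      by_contra hf0
      exact hw0.not_gt (pos_of_mul_pos_right (hf_supp hf0).1 (by positivity))
    simp [rescaledIntegrand, hf0]
  rcases hw.lt_or_gt with hw1 | hw1
  · have hG_ratio := hG.tendsto_div_of_tendsto hmono hpos (sub_pos.2 hw1) hgap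
    have hdensity := (tendsto_comp_mul_div_rpow hf hw0).comp
      (tendsto_div_const_nhdsGT_zero (mul_pos hτ hδ))
    rw [Set.indicator_of_mem (Set.mem_Ioo.2 ⟨hw0, hw1⟩), ← mul_assoc, mul_comm]
    exact hG_ratio.mul hdensity
  · rw [Set.indicator_of_notMem fun h => h.2.not_gt hw1]
    refine tendsto_const_nhds.congr' ?_
    filter_upwards [self_mem_nhdsWithin, hgap.eventually_lt_const (sub_neg.2 hw1)]
      with e (he : 0 < e) hneg
    simp [rescaledIntegrand, hzero _ (mul_neg_of_neg_of_pos hneg he).le]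

lemma tendsto_integral_rescaledIntegrand (hG : IsRegularlyVaryingAtZero G γ) (hmono : Monotone G)
    (hzero : ∀ t ≤ 0, G t = 0) (hpos : ∀ t, 0 < t → 0 < G t) (hf_meas : Measurable f)
    (hf_nonneg : ∀ z, 0 ≤ f z) (hf_supp : Function.support f ⊆ Set.Ioo 0 (1 / δ))
    (hf : Tendsto (fun z => f z / z ^ (a - 1)) (𝓝[>] 0) (𝓝 c)) (ha : 0 < a)
    (hδ : 0 < δ) (hτ : 0 < τ) :
    Tendsto (fun e => ∫ w, rescaledIntegrand G f a δ τ e w) (𝓝[>] 0)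
      (𝓝 (c * beta a (γ + 1))) := by
  have hγ : 0 ≤ γ := hG.index_nonneg hmono hpos
  have hlimit : ∫ w, (Set.Ioo 0 1).indicator (fun w => c * (w ^ (a - 1) * (1 - w) ^ γ)) w =
      c * beta a (γ + 1) := by
    rw [integral_indicator measurableSet_Ioo, integral_const_mul,
      ← integral_Ioo_rpow_mul_one_sub_rpow ha (by positivity), add_sub_cancel_right]
  rw [← hlimit]
  refine tendsto_integral_filter_of_dominated_convergence
    ((Set.Ioc 0 2).indicator fun w => (c + 1) * w ^ (a - 1)) ?_ ?_ ?_ ?_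
  · have := hmono.measurable
    have := measurable_rescaledGap τ
    unfold rescaledIntegrand
    exact Eventually.of_forall fun e => Measurable.aestronglyMeasurable (by fun_prop)
  · exact (eventually_norm_rescaledIntegrand_le hmono hzero hpos hf_nonneg hf_supp hf hδ hτ).mono
      fun _ h => ae_of_all _ h
  · rw [integrable_indicator_iff measurableSet_Ioc,
      ← intervalIntegrable_iff_integrableOn_Ioc_of_le zero_le_two]
    exact (intervalIntegral.intervalIntegrable_rpow' (by linarith)).const_mul _
  · filter_upwards [Measure.ae_ne volume 1] with w hw
    exact tendsto_rescaledIntegrand hG hmono hzero hpos hf_supp hf hδ hτ hw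

end RescaledIntegrand

section UpperTail

variable {μ : Measure ℝ}

lemma cdf_lt_one_of_lt {s x : ℝ} (hs : IsLUB {u | cdf μ u < 1} s) (hx : x < s) :
    cdf μ x < 1 := by
  obtain ⟨y, hy, hxy⟩ := (lt_isLUB_iff hs).1 hx
  exact (monotone_cdf μ hxy.le).trans_lt hy

lemma cdf_eq_one_of_le {s x : ℝ} (hs : IsLUB {u | cdf μ u < 1} s) (hx : s ≤ x) :
    cdf μ x = 1 := by
  have hgt : ∀ y, s < y → cdf μ y = 1 := fun y hy =>
    (cdf_le_one μ y).antisymm (not_lt.1 fun h => hy.not_ge (hs.1 h))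
  have hright : Tendsto (cdf μ) (𝓝[>] x) (𝓝 (cdf μ x)) :=
    ((cdf μ).right_continuous x).mono_left (nhdsWithin_mono x Set.Ioi_subset_Ici_self)
  refine tendsto_nhds_unique hright (tendsto_const_nhds.congr' ?_)
  filter_upwards [self_mem_nhdsWithin] with y hy using (hgt y (hx.trans_lt hy)).symm

/-- The mass that `μ` puts above `1 - t`. -/
def upperTail (μ : Measure ℝ) (t : ℝ) : ℝ := 1 - cdf μ (1 - t)

lemma monotone_upperTail : Monotone (upperTail μ) := fun _ _ h =>
  sub_le_sub_left (monotone_cdf μ (sub_le_sub_left h 1)) 1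

lemma upperTail_eq_zero (hμ : IsLUB {u | cdf μ u < 1} 1) {t : ℝ} (ht : t ≤ 0) :
    upperTail μ t = 0 := by
  rw [upperTail, cdf_eq_one_of_le hμ (by linarith), sub_self]

lemma upperTail_pos (hμ : IsLUB {u | cdf μ u < 1} 1) {t : ℝ} (ht : 0 < t) : 0 < upperTail μ t :=
  sub_pos.2 (cdf_lt_one_of_lt hμ (by linarith))

lemma isRegularlyVaryingAtZero_upperTail {γ : ℝ}
    (hMDA : ∀ x : ℝ, 0 < x →
      Tendsto (fun u => (1 - cdf μ (1 - x / u)) / (1 - cdf μ (1 - 1 / u))) atTop (𝓝 (x ^ γ))) :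
    IsRegularlyVaryingAtZero (upperTail μ) γ := fun x hx =>
  ((hMDA x hx).comp tendsto_inv_nhdsGT_zero).congr fun e => by simp [upperTail]

lemma measureReal_setOf_lt_mul [IsProbabilityMeasure μ] (u : ℝ) {r : ℝ} (hr : 0 < r) :
    μ.real {x | u < x * r} = upperTail μ (1 - u / r) := by
  have : {x | u < x * r} = (Set.Iic (u / r))ᶜ := by
    ext x
    simp [div_lt_iff₀ hr]
  rw [this, probReal_compl_eq_one_sub measurableSet_Iic, upperTail, sub_sub_cancel, cdf_eq_real]

end UpperTail

lemma measureReal_setOf_lt_mul_eq_integral {Ω : Type*} [MeasurableSpace Ω] {P : Measure Ω}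
    [IsProbabilityMeasure P] {X Z : Ω → ℝ} (hX : Measurable X) (hZ : Measurable Z)
    (hInd : IndepFun X Z P) {f g : ℝ → ℝ} (hf_meas : Measurable f) (hf_nonneg : ∀ z, 0 ≤ f z)
    (hf : P.map Z = volume.withDensity fun z => ENNReal.ofReal (f z)) (hg_meas : Measurable g)
    (hg_pos : ∀ z ∈ Function.support f, 0 < g z) (u : ℝ) :
    P.real {ω | u < X ω * g (Z ω)} = ∫ z, upperTail (P.map X) (1 - u / g z) * f z := by
  have := Measure.isProbabilityMeasure_map hX.aemeasurable (μ := P)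
  have := Measure.isProbabilityMeasure_map hZ.aemeasurable (μ := P)
  have hS : MeasurableSet {p : ℝ × ℝ | u < p.1 * g p.2} := measurableSet_lt (by fun_prop)
    (by fun_prop)
  calc P.real {ω | u < X ω * g (Z ω)}
      = ((P.map X).prod (P.map Z)).real {p | u < p.1 * g p.2} := by
        rw [← hInd.map_prod_eq_prod_map_map hX.aemeasurable hZ.aemeasurable,
          map_measureReal_apply (hX.prodMk hZ) hS]
        rfl
    _ = ∫ z, (P.map X).real {x | u < x * g z} ∂P.map Z := by
        rw [measureReal_def, Measure.prod_apply_symm hS,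
          ← integral_toReal (measurable_measure_prodMk_right hS).aemeasurable
            (ae_of_all _ fun _ => measure_lt_top _ _)]
        rfl
    _ = ∫ z, upperTail (P.map X) (1 - u / g z) * f z := by
        rw [hf, integral_withDensity_eq_integral_toReal_smul hf_meas.ennreal_ofReal
          (ae_of_all _ fun _ => ENNReal.ofReal_lt_top)]
        refine integral_congr_ae (ae_of_all _ fun z => ?_)
        dsimp only
        rw [ENNReal.toReal_ofReal (hf_nonneg z), smul_eq_mul, mul_comm]
        rcases eq_or_ne (f z) 0 with hfz | hfz
        · simp [hfz]
        · rw [measureReal_setOf_lt_mul u (hg_pos z hfz)]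

theorem product_beta_tail_weibull_general
    {Ω : Type*} [MeasurableSpace Ω] (P : Measure Ω) [IsProbabilityMeasure P]
    (X Z : Ω → ℝ) (hXmeas : Measurable X) (hZmeas : Measurable Z) (hInd : IndepFun X Z P)
    (F : ℝ → ℝ) (hF : ∀ u, F u = (P {ω | X ω ≤ u}).toReal)
    (δ τ : ℝ) (hδ : 0 < δ) (hτ : 0 < τ)
    (f : ℝ → ℝ) (hf_meas : Measurable f) (hf_nonneg : ∀ z, 0 ≤ f z)
    (hf_supp : Function.support f ⊆ Set.Ioo 0 (1 / δ))
    (hZ : P.map Z = volume.withDensity fun z => ENNReal.ofReal (f z))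
    (a c : ℝ) (ha : 0 < a) (hf : Tendsto (fun z => f z / z ^ (a - 1)) (𝓝[>] 0) (𝓝 c))
    (Y : Ω → ℝ) (hY : ∀ ω, Y ω = X ω * (1 - δ * Z ω) ^ τ)
    (hxF : IsLUB {u | F u < 1} 1) (γ : ℝ)
    (hMDA : ∀ x : ℝ, 0 < x →
      Tendsto (fun u => (1 - F (1 - x / u)) / (1 - F (1 - 1 / u))) atTop (𝓝 (x ^ γ))) :
    Tendsto (fun u => (P {ω | Y ω > u}).toReal / (((1 - u) / (τ * δ)) ^ a * (1 - F u)))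
      (𝓝[<] 1) (𝓝 (c * beta a (γ + 1))) := by
  have := Measure.isProbabilityMeasure_map hXmeas.aemeasurable (μ := P)
  obtain rfl : F = cdf (P.map X) := funext fun u => by
    rw [hF, cdf_eq_real, map_measureReal_apply hXmeas measurableSet_Iic]
    rfl
  obtain rfl : Y = fun ω => X ω * (1 - δ * Z ω) ^ τ := funext hY
  have hlimit := tendsto_integral_rescaledIntegrand (isRegularlyVaryingAtZero_upperTail hMDA)
    monotone_upperTail (fun _ => upperTail_eq_zero hxF) (fun _ => upperTail_pos hxF)
    hf_meas hf_nonneg hf_supp hf ha hδ hτ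
  have hpos : ∀ z ∈ Function.support f, 0 < (1 - δ * z) ^ τ := fun z hz => by
    exact Real.rpow_pos_of_pos (sub_pos.2 ((lt_div_iff₀' hδ).1 (hf_supp hz).2)) τ
  refine (hlimit.comp (tendsto_sub_left_nhdsLT 1)).congr' ?_
  filter_upwards [self_mem_nhdsWithin] with u (hu : u < 1)
  have htail := measureReal_setOf_lt_mul_eq_integral hXmeas hZmeas hInd hf_meas hf_nonneg hZ
    (g := fun z => (1 - δ * z) ^ τ) (by fun_prop) hpos u
  rw [Function.comp_apply, integral_rescaledIntegrand hδ hτ (sub_pos.2 hu), sub_sub_cancel,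
    ← htail, upperTail, sub_sub_cancel]
  rfl

section BetaDensity

variable {a b : ℝ}

lemma betaPDF_eq_betaPDFReal (x : ℝ) : _root_.betaPDF a b x = betaPDFReal a b x := by
  simp only [_root_.betaPDF, betaPDFReal, beta, one_div_div]
  split_ifs <;> ring

lemma support_betaPDFReal_subset : Function.support (betaPDFReal a b) ⊆ Set.Ioo 0 1 :=
  fun _ hx => not_not.1 fun h => hx (if_neg h)

lemma betaPDFReal_nonneg (ha : 0 < a) (hb : 0 < b) (x : ℝ) : 0 ≤ betaPDFReal a b x := by
  by_cases hx : 0 < x ∧ x < 1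
  · exact (betaPDFReal_pos hx.1 hx.2 ha hb).le
  · exact (if_neg hx).ge

lemma tendsto_betaPDFReal_div_rpow :
    Tendsto (fun x => betaPDFReal a b x / x ^ (a - 1)) (𝓝[>] 0) (𝓝 (beta a b)⁻¹) := by
  have hcont : ContinuousAt (fun x : ℝ => (beta a b)⁻¹ * (1 - x) ^ (b - 1)) 0 := by
    fun_prop (disch := simp)
  have hlimit : Tendsto (fun x : ℝ => (beta a b)⁻¹ * (1 - x) ^ (b - 1)) (𝓝[>] 0)
      (𝓝 (beta a b)⁻¹) := by
    simpa using hcont.tendsto.mono_left nhdsWithin_le_nhds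
  refine hlimit.congr' ?_
  filter_upwards [Ioo_mem_nhdsGT one_pos] with x (hx : 0 < x ∧ x < 1)
  have := (Real.rpow_pos_of_pos hx.1 (a - 1)).ne'
  rw [betaPDFReal, if_pos hx]
  field_simp

lemma inv_beta_mul_beta {γ : ℝ} (ha : 0 < a) :
    (beta a b)⁻¹ * beta a (γ + 1) =
      Real.Gamma (γ + 1) * Real.Gamma (a + b) / (Real.Gamma b * Real.Gamma (γ + a + 1)) := by
  have := (Real.Gamma_pos_of_pos ha).ne'
  rw [beta, beta, show a + (γ + 1) = γ + a + 1 by ring]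
  field_simp

end BetaDensity

/-- Theorem 5 b), tail part: asymptotics of `P(Y > u)` for `Y = X(1 - δZ)^τ` with `F` in
the Weibull max-domain of attraction. -/
theorem product_beta_tail_weibull
    {Ω : Type*} [MeasurableSpace Ω] (P : Measure Ω) [IsProbabilityMeasure P]
    (X Z : Ω → ℝ)
    (hXmeas : Measurable X) (hZmeas : Measurable Z)
    (hInd : IndepFun X Z P)
    -- `F` is the distribution function of `X`, with `F(0) = 0`
    (F : ℝ → ℝ) (hF : ∀ u, F u = (P {ω | X ω ≤ u}).toReal) (hF0 : F 0 = 0)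
    -- `Z ~ Beta(a, b)`
    (a b : ℝ) (ha : 0 < a) (hb : 0 < b)
    (hZ : P.map Z = volume.withDensity (fun x => ENNReal.ofReal (betaPDF a b x)))
    (δ τ : ℝ) (hδ0 : 0 < δ) (hδ1 : δ ≤ 1) (hτ : 0 < τ)
    (Y : Ω → ℝ) (hY : ∀ ω, Y ω = X ω * (1 - δ * Z ω) ^ τ)
    -- `F` has upper endpoint `1` and is in the max-domain of attraction of `Ψ_γ`
    (hxF : IsLUB {u | F u < 1} 1)
    (γ : ℝ) (hγ : 0 < γ)
    (hMDA : ∀ x : ℝ, 0 < x →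
      Tendsto (fun u => (1 - F (1 - x / u)) / (1 - F (1 - 1 / u))) atTop (𝓝 (x ^ γ)))
 :
    Tendsto (fun u =>
        (P {ω | Y ω > u}).toReal /
          ((Real.Gamma (γ + 1) * Real.Gamma (a + b) /
              (Real.Gamma b * Real.Gamma (γ + a + 1))) *
            ((1 - u) / (τ * δ)) ^ a * (1 - F u)))
      (𝓝[<] (1 : ℝ)) (𝓝 1) := by
  simp only [betaPDF_eq_betaPDFReal] at hZ
  have hsupp : Function.support (betaPDFReal a b) ⊆ Set.Ioo 0 (1 / δ) :=
    support_betaPDFReal_subset.trans (Set.Ioo_subset_Ioo_right (one_le_one_div hδ0 hδ1))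
  have hlimit := product_beta_tail_weibull_general P X Z hXmeas hZmeas hInd F hF δ τ hδ0 hτ _
    (measurable_betaPDFReal a b) (betaPDFReal_nonneg ha hb) hsupp hZ a _ ha
    tendsto_betaPDFReal_div_rpow Y hY hxF γ hMDA
  have hconst : (beta a b)⁻¹ * beta a (γ + 1) ≠ 0 :=
    (mul_pos (inv_pos.2 (beta_pos ha hb)) (beta_pos ha (by positivity))).ne'
  rw [inv_beta_mul_beta ha] at hlimit hconst
  refine ((hlimit.div_const _).congr fun u => ?_).trans_eq (congrArg 𝓝 (div_self hconst))
  rw [div_right_comm, div_div, mul_assoc (_ / _)]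
end
end

section
/- Let X = A R U be an elliptical random vector in ℝ^d, d ≥ 2, with m < d the multiplicity of the largest eigenvalue λ_(m) of Σ = AAᵀ, and let W ~ Beta(m/2, (d−m)/2) be independent of R. Then for every u > 0: P(λ_(m) R² > u) = 1 − F(√(u/λ_(m))) ≥ P(‖X‖² ≥ u) ≥ P(λ_(m) R² W > u). -/
/-!
The idea is to identify the law of `‖P_K U‖²` for `U` rotation invariant with `‖U‖ = 1` and `K` a
proper nonzero subspace. Let `G` be a standard Gaussian vector on `K`, independent of `U`. Given
`U`, `⟪U, G⟫` is distributed as `‖P_K U‖ g` with `g` a standard real Gaussian; given `G`, it is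
distributed as `‖G‖ ⟪U, e⟫` with `e` any fixed unit vector. Comparing the absolute moments, for `K`
and for the whole space, expresses those of `‖P_K U‖` through those of chi distributions. They show
that `‖P_K U‖²` has the moments of a Beta distribution, which determine its law.

When `K` is the eigenspace of `Aᵀ A` for its largest eigenvalue `λ`, we have
`λ ‖P_K x‖² ≤ ‖A x‖² ≤ λ ‖x‖²`, with equality on the right only if `‖P_K x‖ = ‖x‖`; the latter has
probability zero for `x = U`, which is what turns `≥` into `>` in the upper bound.
-/

open MeasureTheory Filter Topology Matrix ProbabilityTheory

noncomputable section

open Module InnerProductSpace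
open scoped RealInnerProductSpace ENNReal

section Moments

variable {μ ν : Measure ℝ}

lemma iteratedDeriv_complexMGF_id_zero (hμ : 0 ∈ interior (integrableExpSet id μ)) (n : ℕ) :
    iteratedDeriv n (complexMGF id μ) 0 = (∫ x, x ^ n ∂μ : ℝ) := by
  rw [iteratedDeriv_complexMGF (by simpa using hμ)]
  simp [← integral_complex_ofReal]

lemma complexMGF_id_eventuallyEq_of_integral_pow_eq
    (hμ : 0 ∈ interior (integrableExpSet id μ)) (hν : 0 ∈ interior (integrableExpSet id ν))
    (h : ∀ n : ℕ, ∫ x, x ^ n ∂μ = ∫ x, x ^ n ∂ν) :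
    complexMGF id μ =ᶠ[𝓝 0] complexMGF id ν := by
  have hseries (ρ : Measure ℝ) (hρ : 0 ∈ interior (integrableExpSet id ρ)) :=
    (analyticAt_complexMGF (z := 0) (by simpa using hρ)).hasFPowerSeriesAt.eventually_hasSum_sub
  filter_upwards [hseries μ hμ, hseries ν hν] with z hzμ hzν
  simp only [iteratedDeriv_complexMGF_id_zero, hμ, hν, h] at hzμ hzν
  exact hzμ.unique hzν

theorem eq_of_integral_pow_eq [IsFiniteMeasure μ] [IsFiniteMeasure ν]
    (hμ : 0 ∈ interior (integrableExpSet id μ)) (hν : 0 ∈ interior (integrableExpSet id ν))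
    (h : ∀ n : ℕ, ∫ x, x ^ n ∂μ = ∫ x, x ^ n ∂ν) : μ = ν := by
  let I := interior (integrableExpSet id μ) ∩ interior (integrableExpSet id ν)
  have hstrip : IsPreconnected {z : ℂ | z.re ∈ I} :=
    ((convex_integrableExpSet.interior.inter convex_integrableExpSet.interior).linear_preimage
      Complex.reLm).isPreconnected
  have heq : Set.EqOn (complexMGF id μ) (complexMGF id ν) {z | z.re ∈ I} :=
    (analyticOnNhd_complexMGF.mono fun z hz ↦ hz.1).eqOn_of_preconnected_of_eventuallyEq
      (analyticOnNhd_complexMGF.mono fun z hz ↦ hz.2) hstrip (z₀ := 0) (by exact ⟨hμ, hν⟩)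
      (complexMGF_id_eventuallyEq_of_integral_pow_eq hμ hν h)
  refine Measure.ext_of_charFun (funext fun t ↦ ?_)
  rw [← complexMGF_id_mul_I, ← complexMGF_id_mul_I]
  exact heq (by simpa using ⟨hμ, hν⟩)

lemma zero_mem_interior_integrableExpSet_of_mem_Icc [IsFiniteMeasure μ] {a b : ℝ}
    (hμ : ∀ᵐ x ∂μ, x ∈ Set.Icc a b) : 0 ∈ interior (integrableExpSet id μ) := by
  have huniv : integrableExpSet id μ = Set.univ :=
    Set.eq_univ_of_forall fun t ↦ integrable_exp_mul_of_mem_Icc aemeasurable_id hμ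
  simp [huniv]

end Moments

section Beta

variable {a b : ℝ}

lemma measurable_betaPDF (a b : ℝ) : Measurable (ProbabilityTheory.betaPDF a b) :=
  (measurable_betaPDFReal a b).ennreal_ofReal

lemma integral_betaMeasure (ha : 0 < a) (hb : 0 < b) (f : ℝ → ℝ) :
    ∫ x, f x ∂betaMeasure a b = ∫ x, betaPDFReal a b x * f x := by
  have hnonneg (x : ℝ) : 0 ≤ betaPDFReal a b x := by
    by_cases h : 0 < x ∧ x < 1
    · exact (betaPDFReal_pos h.1 h.2 ha hb).le
    · simp [betaPDFReal, h]
  rw [betaMeasure, integral_withDensity_eq_integral_toReal_smul (measurable_betaPDF a b)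
    (by simp [ProbabilityTheory.betaPDF])]
  simp [ProbabilityTheory.betaPDF, hnonneg]

lemma betaPDFReal_mul_pow (ha : 0 < a) (hb : 0 < b) (n : ℕ) (x : ℝ) :
    betaPDFReal a b x * x ^ n = beta (a + n) b / beta a b * betaPDFReal (a + n) b x := by
  unfold betaPDFReal
  split_ifs with hx
  · have hbeta := (beta_pos (add_pos_of_pos_of_nonneg ha n.cast_nonneg) hb).ne'
    rw [add_sub_right_comm, Real.rpow_add_natCast hx.1.ne']
    field_simp
  · simp

theorem integral_pow_betaMeasure (ha : 0 < a) (hb : 0 < b) (n : ℕ) :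
    ∫ x, x ^ n ∂betaMeasure a b = beta (a + n) b / beta a b := by
  have han : 0 < a + n := by positivity
  have htotal : ∫ x, betaPDFReal (a + n) b x = 1 := by
    have := isProbabilityMeasureBeta han hb
    simpa using (integral_betaMeasure han hb fun _ ↦ 1).symm
  simp only [integral_betaMeasure ha hb, betaPDFReal_mul_pow ha hb, integral_const_mul, htotal,
    mul_one]

lemma ae_mem_Icc_betaMeasure (a b : ℝ) : ∀ᵐ x ∂betaMeasure a b, x ∈ Set.Icc 0 1 := by
  rw [betaMeasure, ae_withDensity_iff (measurable_betaPDF a b)]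
  refine .of_forall fun x hx ↦ ⟨?_, ?_⟩ <;> contrapose! hx
  exacts [betaPDF_eq_zero_of_nonpos hx.le, betaPDF_eq_zero_of_one_le hx.le]

end Beta

section Gaussian

variable {E : Type*} [NormedAddCommGroup E] [InnerProductSpace ℝ E] [FiniteDimensional ℝ E]
  [MeasurableSpace E] [BorelSpace E]

lemma integrable_exp_neg_half_mul_sq_norm : Integrable fun x : E ↦ Real.exp (-(1 / 2) * ‖x‖ ^ 2) :=
  .of_integral_ne_zero <| by
    rw [GaussianFourier.integral_rexp_neg_mul_sq_norm (by norm_num)]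
    positivity

variable (E) in
lemma stdGaussian_eq_withDensity :
    stdGaussian E = volume.withDensity fun x ↦ ENNReal.ofReal
      ((Real.pi / (1 / 2)) ^ (-(finrank ℝ E / 2 : ℝ)) * Real.exp (-(1 / 2) * ‖x‖ ^ 2)) := by
  set c : ℝ := (Real.pi / (1 / 2)) ^ (-(finrank ℝ E / 2 : ℝ)) with hc
  have : 0 ≤ c := by positivity
  have := isFiniteMeasure_withDensity_ofReal
    ((integrable_exp_neg_half_mul_sq_norm (E := E)).const_mul c).2
  have hcpow : (c : ℂ) * (Real.pi / (1 / 2)) ^ (finrank ℝ E / 2 : ℂ) = 1 := by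
    have hπ : (0 : ℝ) < Real.pi / (1 / 2) := by positivity
    have hpow := Complex.ofReal_cpow hπ.le (finrank ℝ E / 2)
    push_cast at hpow
    rw [hc, Real.rpow_neg hπ.le, ← hpow, ← Complex.ofReal_mul,
      inv_mul_cancel₀ (Real.rpow_pos_of_pos hπ _).ne', Complex.ofReal_one]
  refine Measure.ext_of_charFun (funext fun t ↦ Eq.symm ?_)
  rw [charFun_stdGaussian, charFun_apply, integral_withDensity_eq_integral_toReal_smul
    (by fun_prop) (by simp)]
  calc ∫ x : E, (ENNReal.ofReal (c * Real.exp (-(1 / 2) * ‖x‖ ^ 2))).toReal •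
          Complex.exp (⟪x, t⟫ * Complex.I)
      = ∫ x : E, c * Complex.exp (-(1 / 2) * ‖x‖ ^ 2 + Complex.I * ⟪t, x⟫) := by
        congr with x
        rw [ENNReal.toReal_ofReal (by positivity), Complex.real_smul, Complex.exp_add,
          real_inner_comm, mul_comm Complex.I]
        push_cast
        ring
    _ = Complex.exp (-‖t‖ ^ 2 / 2) := by
        rw [integral_const_mul, GaussianFourier.integral_cexp_neg_mul_sq_norm_add (by norm_num),
          ← mul_assoc, hcpow, one_mul, Complex.I_sq]
        ring_nf

lemma integral_Ioi_pow_mul_exp_neg_half_mul_sq (n : ℕ) :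
    ∫ y in Set.Ioi (0 : ℝ), y ^ n * Real.exp (-(1 / 2) * y ^ 2) =
      2 ^ ((n + 1) / 2 : ℝ) / 2 * Real.Gamma ((n + 1) / 2) := by
  have h := integral_rpow_mul_exp_neg_mul_rpow (p := 2) (q := n) (b := 1 / 2) (by norm_num)
    (by linarith [n.cast_nonneg (α := ℝ)]) (by norm_num)
  simp only [Real.rpow_natCast, Real.rpow_two] at h
  rw [h, one_div, Real.inv_rpow zero_le_two, ← Real.rpow_neg zero_le_two]
  ring_nf

variable (E) in
lemma exists_integral_norm_pow_stdGaussian_eq_mul [Nontrivial E] : ∃ c : ℝ, ∀ n : ℕ,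
    ∫ x, ‖x‖ ^ n ∂stdGaussian E = c * (2 ^ (n / 2 : ℝ) * Real.Gamma ((finrank ℝ E + n) / 2)) := by
  set d := finrank ℝ E with hd
  set z : ℝ := (Real.pi / (1 / 2)) ^ (-(d / 2 : ℝ)) with hz
  have hdim (n : ℕ) : ((d - 1 + n : ℕ) : ℝ) + 1 = d + n := by
    have : 0 < d := finrank_pos
    push_cast [this]
    ring
  have hdensity (x : E) : 0 ≤ z * Real.exp (-(1 / 2) * ‖x‖ ^ 2) := by positivity
  refine ⟨z * (d * volume.real (Metric.ball (0 : E) 1)) * (2 ^ (d / 2 : ℝ) / 2), fun n ↦ ?_⟩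
  have hpolar := integral_fun_norm_addHaar (E := E) volume
    fun y : ℝ ↦ y ^ n * Real.exp (-(1 / 2) * y ^ 2)
  simp only [nsmul_eq_mul, smul_eq_mul, ← mul_assoc, ← pow_add, ← hd,
    integral_Ioi_pow_mul_exp_neg_half_mul_sq, hdim] at hpolar
  calc ∫ x, ‖x‖ ^ n ∂stdGaussian E
      = z * ∫ x : E, ‖x‖ ^ n * Real.exp (-(1 / 2) * ‖x‖ ^ 2) := by
        rw [stdGaussian_eq_withDensity, integral_withDensity_eq_integral_toReal_smul (by fun_prop)
          (by simp), ← integral_const_mul]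
        congr with x
        rw [← hd, ← hz, ENNReal.toReal_ofReal (hdensity x), smul_eq_mul]
        ring
    _ = _ := by
        rw [hpolar, add_div, Real.rpow_add two_pos]
        ring

variable (E) in
theorem integral_norm_pow_stdGaussian [Nontrivial E] (n : ℕ) :
    ∫ x, ‖x‖ ^ n ∂stdGaussian E =
      2 ^ (n / 2 : ℝ) * Real.Gamma ((finrank ℝ E + n) / 2) / Real.Gamma (finrank ℝ E / 2) := by
  have hdim : (0 : ℝ) < finrank ℝ E := by exact_mod_cast finrank_pos (R := ℝ) (M := E)
  have hΓ : 0 < Real.Gamma (finrank ℝ E / 2) := Real.Gamma_pos_of_pos (by positivity)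
  obtain ⟨c, hc⟩ := exists_integral_norm_pow_stdGaussian_eq_mul E
  have htotal : 1 = c * Real.Gamma (finrank ℝ E / 2) := by simpa using hc 0
  rw [hc, eq_div_iff hΓ.ne', mul_right_comm, ← htotal, one_mul]

variable (E) in
lemma lintegral_enorm_pow_stdGaussian [Nontrivial E] (n : ℕ) :
    ∫⁻ x, ‖x‖ₑ ^ n ∂stdGaussian E = ENNReal.ofReal
      (2 ^ (n / 2 : ℝ) * Real.Gamma ((finrank ℝ E + n) / 2) / Real.Gamma (finrank ℝ E / 2)) := by
  have hdim : (0 : ℝ) < finrank ℝ E := by exact_mod_cast finrank_pos (R := ℝ) (M := E)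
  have hmoment := integral_norm_pow_stdGaussian E n
  have hint : Integrable (fun x : E ↦ ‖x‖ ^ n) (stdGaussian E) := .of_integral_ne_zero <| by
    rw [hmoment]
    positivity
  rw [← hmoment, ofReal_integral_eq_lintegral_ofReal hint (.of_forall fun x ↦ by positivity)]
  simp_rw [ENNReal.ofReal_pow (norm_nonneg _), ofReal_norm]

lemma map_inner_stdGaussian (v : E) :
    (stdGaussian E).map (fun x ↦ ⟪x, v⟫) = (stdGaussian ℝ).map (‖v‖ * ·) := by
  refine Measure.ext_of_charFun (funext fun t ↦ ?_)
  have hproj :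
      charFun ((stdGaussian E).map fun x ↦ ⟪x, v⟫) t = charFun (stdGaussian E) (t • v) := by
    rw [charFun_apply, charFun_apply, integral_map (by fun_prop) (by fun_prop)]
    simp [inner_smul_right]
  rw [hproj, charFun_map_mul, charFun_stdGaussian, charFun_stdGaussian]
  simp [norm_smul, mul_comm]

lemma lintegral_enorm_inner_pow_stdGaussian (v : E) (n : ℕ) :
    ∫⁻ x, ‖⟪x, v⟫‖ₑ ^ n ∂stdGaussian E = ‖v‖ₑ ^ n * ∫⁻ t, ‖t‖ₑ ^ n ∂stdGaussian ℝ := by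
  have hmeas : Measurable fun t : ℝ ↦ ‖t‖ₑ ^ n := by fun_prop
  rw [← lintegral_map (f := fun t : ℝ ↦ ‖t‖ₑ ^ n) hmeas (by fun_prop), map_inner_stdGaussian,
    lintegral_map hmeas (by fun_prop), ← lintegral_const_mul _ hmeas]
  simp [mul_pow]

end Gaussian

lemma toReal_lintegral_enorm_pow {α F : Type*} [MeasurableSpace α] [NormedAddCommGroup F]
    {μ : Measure α} {f : α → F} (hf : AEStronglyMeasurable f μ) (n : ℕ) :
    (∫⁻ x, ‖f x‖ₑ ^ n ∂μ).toReal = ∫ x, ‖f x‖ ^ n ∂μ := by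
  simpa [enorm_pow] using (integral_norm_eq_lintegral_enorm (hf.norm.pow n)).symm

section RotationInvariant

variable {E : Type*} [NormedAddCommGroup E] [InnerProductSpace ℝ E] [MeasurableSpace E]

/-- Invariance of a measure under all linear isometries; the uniform distributions on spheres
centred at the origin are the examples of interest. -/
def IsRotationInvariant (μ : Measure E) : Prop :=
  ∀ L : E ≃ₗᵢ[ℝ] E, μ.map L = μ

namespace IsRotationInvariant

variable [BorelSpace E] {μ : Measure E}

lemma map_inner_eq (hμ : IsRotationInvariant μ) {v w : E} (h : ‖v‖ = ‖w‖) :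
    μ.map (fun x ↦ ⟪x, v⟫) = μ.map (fun x ↦ ⟪x, w⟫) := by
  set L := (ℝ ∙ (v - w))ᗮ.reflection
  have hinner : (fun x ↦ ⟪x, v⟫) = (fun x ↦ ⟪x, w⟫) ∘ L := by
    ext x
    rw [Function.comp_apply, ← Submodule.reflection_sub h, LinearIsometryEquiv.inner_map_map]
  rw [hinner, ← Measure.map_map (by fun_prop) (by fun_prop), hμ]

lemma lintegral_enorm_inner_pow (hμ : IsRotationInvariant μ) {e : E} (he : ‖e‖ = 1) (v : E)
    (n : ℕ) : ∫⁻ x, ‖⟪x, v⟫‖ₑ ^ n ∂μ = ‖v‖ₑ ^ n * ∫⁻ x, ‖⟪x, e⟫‖ₑ ^ n ∂μ := by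
  have hmeas : Measurable fun t : ℝ ↦ ‖t‖ₑ ^ n := by fun_prop
  have hnorm : ‖v‖ = ‖‖v‖ • e‖ := by simp [norm_smul, he]
  rw [← lintegral_map (f := fun t : ℝ ↦ ‖t‖ₑ ^ n) hmeas (by fun_prop), hμ.map_inner_eq hnorm,
    lintegral_map hmeas (by fun_prop), ← lintegral_const_mul' _ _ (by simp)]
  simp [inner_smul_right, mul_pow]

variable [FiniteDimensional ℝ E]

lemma lintegral_enorm_orthogonalProjectionOnto_pow_mul [SFinite μ] (hμ : IsRotationInvariant μ)
    {e : E} (he : ‖e‖ = 1) (K : Submodule ℝ E) (n : ℕ) :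
    (∫⁻ x, ‖K.orthogonalProjectionOnto x‖ₑ ^ n ∂μ) * ∫⁻ t, ‖t‖ₑ ^ n ∂stdGaussian ℝ =
      (∫⁻ x, ‖⟪x, e⟫‖ₑ ^ n ∂μ) * ∫⁻ y, ‖y‖ₑ ^ n ∂stdGaussian K := by
  calc (∫⁻ x, ‖K.orthogonalProjectionOnto x‖ₑ ^ n ∂μ) * ∫⁻ t, ‖t‖ₑ ^ n ∂stdGaussian ℝ
      = ∫⁻ x, ∫⁻ y, ‖⟪x, (y : E)⟫‖ₑ ^ n ∂stdGaussian K ∂μ := by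
        rw [← lintegral_mul_const _ (by fun_prop)]
        congr with x
        rw [← lintegral_enorm_inner_pow_stdGaussian]
        congr with y
        rw [Submodule.inner_orthogonalProjectionOnto_eq_of_mem_left, real_inner_comm]
    _ = ∫⁻ y, ∫⁻ x, ‖⟪x, (y : E)⟫‖ₑ ^ n ∂μ ∂stdGaussian K :=
        lintegral_lintegral_swap (by fun_prop)
    _ = (∫⁻ x, ‖⟪x, e⟫‖ₑ ^ n ∂μ) * ∫⁻ y, ‖y‖ₑ ^ n ∂stdGaussian K := by
        rw [lintegral_congr fun y : K ↦ hμ.lintegral_enorm_inner_pow he (y : E) n,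
          lintegral_mul_const _ (by fun_prop), mul_comm]
        rfl

theorem lintegral_enorm_orthogonalProjectionOnto_pow [Nontrivial E] [SFinite μ]
    (hμ : IsRotationInvariant μ) (K : Submodule ℝ E) (n : ℕ) :
    (∫⁻ x, ‖K.orthogonalProjectionOnto x‖ₑ ^ n ∂μ) * ∫⁻ y, ‖y‖ₑ ^ n ∂stdGaussian E =
      (∫⁻ x, ‖x‖ₑ ^ n ∂μ) * ∫⁻ y, ‖y‖ₑ ^ n ∂stdGaussian K := by
  obtain ⟨e, he⟩ := exists_norm_eq E zero_le_one
  set g := ∫⁻ t, ‖t‖ₑ ^ n ∂stdGaussian ℝ with hg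
  have hg0 : g ≠ 0 := by
    rw [hg, lintegral_enorm_pow_stdGaussian, ne_eq, ENNReal.ofReal_eq_zero, not_le, finrank_self]
    positivity
  have hgtop : g ≠ ⊤ := by simp [hg, lintegral_enorm_pow_stdGaussian]
  have hwhole : (∫⁻ x, ‖x‖ₑ ^ n ∂μ) * g =
      (∫⁻ x, ‖⟪x, e⟫‖ₑ ^ n ∂μ) * ∫⁻ y, ‖y‖ₑ ^ n ∂stdGaussian E := by
    have : Nontrivial (⊤ : Submodule ℝ E) := Submodule.topEquiv.toEquiv.nontrivial
    have hnorm (x : E) : ‖(⊤ : Submodule ℝ E).orthogonalProjectionOnto x‖ = ‖x‖ :=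
      Submodule.norm_orthogonalProjectionOnto_apply ⊤ (Submodule.mem_top (x := x))
    have hfull := hμ.lintegral_enorm_orthogonalProjectionOnto_pow_mul he ⊤ n
    simp_rw [← ofReal_norm, hnorm, ofReal_norm] at hfull
    rw [hfull, lintegral_enorm_pow_stdGaussian, lintegral_enorm_pow_stdGaussian, finrank_top]
  rw [← ENNReal.mul_left_inj hg0 hgtop, mul_right_comm,
    hμ.lintegral_enorm_orthogonalProjectionOnto_pow_mul he, mul_right_comm _ _ g, hwhole,
    mul_right_comm]

theorem integral_norm_orthogonalProjectionOnto_pow [SFinite μ] (hμ : IsRotationInvariant μ)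
    (K : Submodule ℝ E) [Nontrivial K] (n : ℕ) :
    ∫ x, ‖K.orthogonalProjectionOnto x‖ ^ n ∂μ =
      Real.Gamma ((finrank ℝ K + n) / 2) / Real.Gamma (finrank ℝ K / 2) /
        (Real.Gamma ((finrank ℝ E + n) / 2) / Real.Gamma (finrank ℝ E / 2)) * ∫ x, ‖x‖ ^ n ∂μ := by
  have : Nontrivial E := K.subtype_injective.nontrivial
  have hE : 0 < finrank ℝ E := finrank_pos
  have hK : 0 < finrank ℝ K := finrank_pos
  have h := congrArg ENNReal.toReal (hμ.lintegral_enorm_orthogonalProjectionOnto_pow K n)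
  simp only [lintegral_enorm_pow_stdGaussian, ENNReal.toReal_mul] at h
  rw [ENNReal.toReal_ofReal (by positivity), ENNReal.toReal_ofReal (by positivity)] at h
  rw [toReal_lintegral_enorm_pow (by fun_prop), toReal_lintegral_enorm_pow (by fun_prop)] at h
  field_simp at h ⊢
  linear_combination h

theorem map_sq_norm_orthogonalProjectionOnto [IsProbabilityMeasure μ]
    (hμ : IsRotationInvariant μ) (hnorm : ∀ᵐ x ∂μ, ‖x‖ = 1) (K : Submodule ℝ E) [Nontrivial K]
    (hK : finrank ℝ K < finrank ℝ E) :
    μ.map (fun x ↦ ‖K.orthogonalProjectionOnto x‖ ^ 2) =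
      betaMeasure (finrank ℝ K / 2) ((finrank ℝ E - finrank ℝ K) / 2) := by
  have ha : (0 : ℝ) < finrank ℝ K / 2 := by
    have : 0 < finrank ℝ K := finrank_pos
    positivity
  have hb : (0 : ℝ) < (finrank ℝ E - finrank ℝ K) / 2 := by
    have : (finrank ℝ K : ℝ) < finrank ℝ E := mod_cast hK
    linarith
  have := isProbabilityMeasureBeta ha hb
  have hmeas : Measurable fun x ↦ ‖K.orthogonalProjectionOnto x‖ ^ 2 := by fun_prop
  have := Measure.isProbabilityMeasure_map (μ := μ) hmeas.aemeasurable
  refine eq_of_integral_pow_eq (zero_mem_interior_integrableExpSet_of_mem_Icc (a := 0) (b := 1) ?_)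
    (zero_mem_interior_integrableExpSet_of_mem_Icc (ae_mem_Icc_betaMeasure _ _)) fun n ↦ ?_
  · rw [ae_map_iff hmeas.aemeasurable (p := (· ∈ Set.Icc 0 1)) measurableSet_Icc]
    filter_upwards [hnorm] with x hx
    have := K.norm_orthogonalProjectionOnto_apply_le x
    exact ⟨by positivity, pow_le_one₀ (norm_nonneg _) (by rwa [hx] at this)⟩
  · rw [integral_pow_betaMeasure ha hb, integral_map hmeas.aemeasurable (by fun_prop)]
    simp_rw [← pow_mul]
    rw [hμ.integral_norm_orthogonalProjectionOnto_pow, integral_congr_ae (g := 1)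
      (hnorm.mono fun x hx ↦ by simp [hx]), beta, beta]
    have hsum : (finrank ℝ K / 2 + (finrank ℝ E - finrank ℝ K) / 2 : ℝ) = finrank ℝ E / 2 := by ring
    have hKn : ((finrank ℝ K + (2 * n : ℕ)) / 2 : ℝ) = finrank ℝ K / 2 + n := by push_cast; ring
    have hEn : ((finrank ℝ E + (2 * n : ℕ)) / 2 : ℝ) = finrank ℝ E / 2 + n := by push_cast; ring
    have := Real.Gamma_pos_of_pos hb
    rw [add_right_comm, hsum, hKn, hEn]
    simp only [Pi.one_apply, integral_const, probReal_univ, smul_eq_mul, mul_one]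
    field_simp

end IsRotationInvariant

end RotationInvariant

section Orthonormal

variable {E ι : Type*} [NormedAddCommGroup E] [InnerProductSpace ℝ E] [DecidableEq E]

lemma sq_norm_orthogonalProjectionOnto_span_image {v : ι → E} (hv : Orthonormal ℝ v) (s : Finset ι)
    (x : E) : ‖(Submodule.span ℝ (s.image v : Set E)).orthogonalProjectionOnto x‖ ^ 2 =
      ∑ i ∈ s, ⟪v i, x⟫ ^ 2 := by
  rw [← (OrthonormalBasis.span hv s).sum_sq_norm_inner_right]
  simpa using Finset.sum_coe_sort s fun i ↦ ⟪v i, x⟫ ^ 2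

lemma finrank_span_image {v : ι → E} (hv : Orthonormal ℝ v) (s : Finset ι) :
    finrank ℝ (Submodule.span ℝ (s.image v : Set E)) = s.card := by
  rw [finrank_eq_card_basis (OrthonormalBasis.span hv s).toBasis, Fintype.card_coe]

end Orthonormal

section Matrix

variable {ι : Type*} [Fintype ι] [DecidableEq ι]

lemma inner_toEuclideanLin_self_eq_sum {S : Matrix ι ι ℝ} (hS : S.IsHermitian)
    (x : EuclideanSpace ℝ ι) :
    ⟪x, toEuclideanLin S x⟫ = ∑ i, hS.eigenvalues i * ⟪hS.eigenvectorBasis i, x⟫ ^ 2 := by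
  have heigen (i : ι) : toEuclideanLin S (hS.eigenvectorBasis i) =
      hS.eigenvalues i • hS.eigenvectorBasis i := by
    ext j
    exact congrFun (hS.mulVec_eigenvectorBasis i) j
  rw [← hS.eigenvectorBasis.sum_inner_mul_inner]
  congr with i
  rw [← isSymmetric_toEuclideanLin_iff.mpr hS, heigen, inner_smul_left, real_inner_comm]
  simp only [conj_trivial]
  ring

lemma inner_toEuclideanLin_transpose_mul_self (A : Matrix ι ι ℝ) (x : EuclideanSpace ℝ ι) :
    ⟪x, toEuclideanLin (Aᵀ * A) x⟫ = ‖toEuclideanLin A x‖ ^ 2 := by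
  rw [← conjTranspose_eq_transpose_of_trivial, toLpLin_mul_same, LinearMap.comp_apply,
    toEuclideanLin_conjTranspose_eq_adjoint, LinearMap.adjoint_inner_right,
    real_inner_self_eq_norm_sq]

lemma exists_orthonormalBasis_sq_norm_toEuclideanLin {A : Matrix ι ι ℝ}
    (hA : (A * Aᵀ).IsHermitian) :
    ∃ b : OrthonormalBasis ι ℝ (EuclideanSpace ℝ ι), ∀ x,
      ‖toEuclideanLin A x‖ ^ 2 = ∑ i, hA.eigenvalues i * ⟪b i, x⟫ ^ 2 := by
  have hA' : (Aᵀ * A).IsHermitian := by simpa using isHermitian_conjTranspose_mul_self A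
  have heig : hA.eigenvalues = hA'.eigenvalues := by
    rw [hA.eigenvalues_eq_eigenvalues_iff hA', charpoly_mul_comm]
  refine ⟨hA'.eigenvectorBasis, fun x ↦ ?_⟩
  rw [heig, ← inner_toEuclideanLin_self_eq_sum, inner_toEuclideanLin_transpose_mul_self]

theorem exists_submodule_sq_norm_toEuclideanLin_bounds {A : Matrix ι ι ℝ}
    (hA : (A * Aᵀ).IsHermitian) {c : ℝ} (hc : ∀ i, hA.eigenvalues i ≤ c) :
    ∃ K : Submodule ℝ (EuclideanSpace ℝ ι),
      finrank ℝ K = (Finset.univ.filter fun i ↦ hA.eigenvalues i = c).card ∧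
      ∀ x, c * ‖K.orthogonalProjectionOnto x‖ ^ 2 ≤ ‖toEuclideanLin A x‖ ^ 2 ∧
        (‖K.orthogonalProjectionOnto x‖ ^ 2 ≠ ‖x‖ ^ 2 →
          ‖toEuclideanLin A x‖ ^ 2 < c * ‖x‖ ^ 2) := by
  classical
  have hnonneg : ∀ i, 0 ≤ hA.eigenvalues i :=
    PosSemidef.eigenvalues_nonneg (by simpa using posSemidef_self_mul_conjTranspose A)
  obtain ⟨b, hb⟩ := exists_orthonormalBasis_sq_norm_toEuclideanLin hA
  set s := Finset.univ.filter fun i ↦ hA.eigenvalues i = c with hs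
  refine ⟨_, finrank_span_image b.orthonormal s, fun x ↦ ?_⟩
  rw [sq_norm_orthogonalProjectionOnto_span_image b.orthonormal, hb, ← b.sum_sq_inner_right]
  refine ⟨?_, fun hne ↦ ?_⟩
  · calc c * ∑ i ∈ s, ⟪b i, x⟫ ^ 2 = ∑ i ∈ s, hA.eigenvalues i * ⟪b i, x⟫ ^ 2 := by
          rw [Finset.mul_sum]
          exact Finset.sum_congr rfl fun i hi ↦ by rw [(Finset.mem_filter.1 hi).2]
      _ ≤ ∑ i, hA.eigenvalues i * ⟪b i, x⟫ ^ 2 :=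
          Finset.sum_le_univ_sum_of_nonneg fun i ↦ mul_nonneg (hnonneg i) (sq_nonneg _)
  · obtain ⟨i, his, hi⟩ : ∃ i ∉ s, ⟪b i, x⟫ ^ 2 ≠ 0 := by
      contrapose! hne
      exact Finset.sum_subset (Finset.subset_univ s) fun i _ ↦ hne i
    have hlt : hA.eigenvalues i < c := (hc i).lt_of_ne fun h ↦ his (by simp [hs, h])
    rw [Finset.mul_sum]
    exact Finset.sum_lt_sum (fun j _ ↦ mul_le_mul_of_nonneg_right (hc j) (sq_nonneg _))
      ⟨i, Finset.mem_univ i, mul_lt_mul_of_pos_right hlt (by positivity)⟩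
lemma exists_mul_transpose_eq_one_and_toEuclideanLin_eq
    (L : EuclideanSpace ℝ ι ≃ₗᵢ[ℝ] EuclideanSpace ℝ ι) :
    ∃ D : Matrix ι ι ℝ, D * Dᵀ = 1 ∧ ∀ x, L x = toEuclideanLin D x := by
  let Φ := toEuclideanCLM (n := ι) (𝕜 := ℝ)
  obtain ⟨D, hD⟩ := EquivLike.surjective Φ (L : EuclideanSpace ℝ ι →L[ℝ] EuclideanSpace ℝ ι)
  refine ⟨D, EquivLike.injective Φ ?_, fun x ↦ ?_⟩
  · rw [← conjTranspose_eq_transpose_of_trivial, ← star_eq_conjTranspose, map_mul, map_star, hD,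
      map_one]
    exact (Unitary.linearIsometryEquiv.symm L).2.2
  · rw [← coe_toEuclideanCLM_eq_toEuclideanLin, hD]
    rfl

end Matrix

lemma withDensity_betaPDF (a b : ℝ) :
    volume.withDensity (fun x ↦ ENNReal.ofReal (_root_.betaPDF a b x)) = betaMeasure a b := by
  rw [betaMeasure]
  congr with x
  rw [_root_.betaPDF, betaPDF_eq, beta, one_div_div]
  ring_nf

section Euclidean

variable {d : ℕ}

lemma eNorm_eq_norm_toLp (x : Fin d → ℝ) : eNorm x = ‖WithLp.toLp 2 x‖ := by
  simp [eNorm, EuclideanSpace.norm_eq]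

lemma sq_eNorm_smul (r : ℝ) (x : Fin d → ℝ) : eNorm (r • x) ^ 2 = r ^ 2 * eNorm x ^ 2 := by
  simp [eNorm_eq_norm_toLp, norm_smul, mul_pow]

variable {Ω : Type*} [MeasurableSpace Ω] {P : Measure Ω} {U : Ω → Fin d → ℝ}

namespace IsUniformOnSphere

lemma isRotationInvariant_map_toLp (hU : IsUniformOnSphere P U) :
    IsRotationInvariant (P.map fun ω ↦ WithLp.toLp 2 (U ω)) := by
  intro L
  obtain ⟨D, hD, hL⟩ := exists_mul_transpose_eq_one_and_toEuclideanLin_eq L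
  obtain ⟨hUmeas, -, hinv⟩ := hU
  have hcomm : (L ∘ fun ω ↦ WithLp.toLp 2 (U ω)) = WithLp.toLp 2 ∘ fun ω ↦ D *ᵥ U ω := by
    ext1 ω
    simp [hL]
  rw [Measure.map_map (by fun_prop) (by fun_prop), hcomm,
    ← Measure.map_map (by fun_prop) (by fun_prop), hinv D hD, Measure.map_map (by fun_prop) hUmeas]
  rfl

theorem map_sq_norm_orthogonalProjectionOnto [IsProbabilityMeasure P] (hU : IsUniformOnSphere P U)
    (K : Submodule ℝ (EuclideanSpace ℝ (Fin d))) [Nontrivial K] (hK : finrank ℝ K < d) :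
    P.map (fun ω ↦ ‖K.orthogonalProjectionOnto (WithLp.toLp 2 (U ω))‖ ^ 2) =
      betaMeasure (finrank ℝ K / 2) ((d - finrank ℝ K) / 2) := by
  have hUmeas := hU.1
  have htoLp : Measurable fun ω ↦ WithLp.toLp 2 (U ω) := by fun_prop
  have := Measure.isProbabilityMeasure_map (μ := P) htoLp.aemeasurable
  have hnorm : ∀ᵐ x ∂P.map fun ω ↦ WithLp.toLp 2 (U ω), ‖x‖ = 1 := by
    rw [ae_map_iff htoLp.aemeasurable (measurableSet_eq_fun (by fun_prop) (by fun_prop))]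
    exact .of_forall fun ω ↦ (eNorm_eq_norm_toLp _).symm.trans (hU.2.1 ω)
  have hlaw := hU.isRotationInvariant_map_toLp.map_sq_norm_orthogonalProjectionOnto hnorm K
    (by simpa using hK)
  rwa [Measure.map_map (by fun_prop) htoLp, finrank_euclideanSpace_fin] at hlaw

theorem exists_map_eq_betaMeasure_and_sq_eNorm_mulVec_bounds [IsProbabilityMeasure P]
    (hU : IsUniformOnSphere P U) {A : Matrix (Fin d) (Fin d) ℝ} (hA : (A * Aᵀ).IsHermitian) {c : ℝ}
    (hc : ∀ i, hA.eigenvalues i ≤ c) {m : ℕ}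
    (hm : (Finset.univ.filter fun i ↦ hA.eigenvalues i = c).card = m) (hm0 : 0 < m) (hmd : m < d) :
    ∃ B : (Fin d → ℝ) → ℝ, Measurable B ∧
      P.map (fun ω ↦ B (U ω)) = betaMeasure (m / 2) ((d - m) / 2) ∧
      (∀ x, c * B x ≤ eNorm (A *ᵥ x) ^ 2) ∧ ∀ᵐ ω ∂P, eNorm (A *ᵥ U ω) ^ 2 < c := by
  obtain ⟨K, hfinrank, hK⟩ := exists_submodule_sq_norm_toEuclideanLin_bounds hA hc
  rw [hm] at hfinrank
  have : Nontrivial K := nontrivial_of_finrank_pos (R := ℝ) (by rwa [hfinrank])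
  have hlaw := hU.map_sq_norm_orthogonalProjectionOnto K (by rwa [hfinrank])
  rw [hfinrank] at hlaw
  have hUmeas := hU.1
  have hne : ∀ᵐ ω ∂P, ‖K.orthogonalProjectionOnto (WithLp.toLp 2 (U ω))‖ ^ 2 ≠ 1 := by
    have hatom : betaMeasure (m / 2) ((d - m) / 2) {1} = 0 :=
      withDensity_absolutelyContinuous _ _ (by simp)
    rw [← hlaw, Measure.map_apply (by fun_prop) (measurableSet_singleton 1)] at hatom
    exact measure_eq_zero_iff_ae_notMem.1 hatom
  refine ⟨fun x ↦ ‖K.orthogonalProjectionOnto (WithLp.toLp 2 x)‖ ^ 2, by fun_prop, hlaw,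
    fun x ↦ ?_, hne.mono fun ω hω ↦ ?_⟩
  · simpa [eNorm_eq_norm_toLp] using (hK (WithLp.toLp 2 x)).1
  · have hsphere : ‖WithLp.toLp 2 (U ω)‖ = 1 := (eNorm_eq_norm_toLp _).symm.trans (hU.2.1 ω)
    simpa [eNorm_eq_norm_toLp, hsphere] using
      (hK (WithLp.toLp 2 (U ω))).2 (by rwa [hsphere, one_pow])

end IsUniformOnSphere

end Euclidean

lemma toReal_measure_lt_mul_sq {Ω : Type*} [MeasurableSpace Ω] {P : Measure Ω}
    [IsProbabilityMeasure P] {R : Ω → ℝ} (hR : Measurable R) (hpos : ∀ ω, 0 < R ω) {c : ℝ}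
    (hc : 0 < c) (u : ℝ) :
    (P {ω | u < c * R ω ^ 2}).toReal = 1 - (P {ω | R ω ≤ √(u / c)}).toReal := by
  have hcompl : {ω | u < c * R ω ^ 2} = {ω | R ω ≤ √(u / c)}ᶜ := by
    ext ω
    simp [Real.sqrt_lt' (hpos ω), div_lt_iff₀' hc]
  rw [hcompl]
  exact probReal_compl_eq_one_sub (measurableSet_le hR measurable_const)

lemma measure_lt_mul_sq_mul_congr {Ω : Type*} [MeasurableSpace Ω] {P : Measure Ω}
    [IsFiniteMeasure P] {R V W : Ω → ℝ} (hR : AEMeasurable R P) (hVW : IdentDistrib V W P P)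
    (hRV : IndepFun R V P) (hRW : IndepFun R W P) (c u : ℝ) :
    P {ω | u < c * R ω ^ 2 * V ω} = P {ω | u < c * R ω ^ 2 * W ω} :=
  ((IdentDistrib.refl hR).prodMk hVW hRV hRW).measure_mem_eq
    (s := {z | u < c * z.1 ^ 2 * z.2}) (measurableSet_lt (by fun_prop) (by fun_prop))

/-- The elementary bounds (10): for every `u > 0`,
`P(λ_(m) R² > u) = 1 - F(√(u/λ_(m))) ≥ P(‖X‖² ≥ u) ≥ P(λ_(m) R² W > u)`
where `W ~ Beta(m/2, (d-m)/2)` is independent of `R`. -/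
theorem norm_elliptical_bounds
    {Ω : Type*} [MeasurableSpace Ω] (P : Measure Ω) [IsProbabilityMeasure P]
    (d : ℕ) [NeZero d] (hd : 2 ≤ d)
    (A : Matrix (Fin d) (Fin d) ℝ)
    (R : Ω → ℝ) (U : Ω → Fin d → ℝ)
    (hRmeas : Measurable R) (hRpos : ∀ ω, 0 < R ω)
    (hU : IsUniformOnSphere P U)
    (hInd : IndepFun R U P)
    (X : Ω → Fin d → ℝ) (hX : ∀ ω, X ω = A.mulVec (R ω • U ω))
    -- `F` is the distribution function of `R`
    (F : ℝ → ℝ) (hF : ∀ u, F u = (P {ω | R ω ≤ u}).toReal) (hF0 : F 0 = 0)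
    -- `lam` enumerates the eigenvalues of `Σ = A Aᵀ` in decreasing order
    (lam : Fin d → ℝ) (hmono : Antitone lam)
    (hlam : ∃ (hH : (A * Aᵀ).IsHermitian) (σ : Equiv.Perm (Fin d)),
      ∀ i, lam i = hH.eigenvalues (σ i))
    (hlam0 : 0 < lam 0)
    -- `m` is the multiplicity of the largest eigenvalue `lam 0 = λ_(m)`
    (m : ℕ) (hm : m = (Finset.univ.filter fun j => lam j = lam 0).card)
    (hmd : m < d)
    -- `W ~ Beta(m/2, (d-m)/2)` is independent of `R`
    (W : Ω → ℝ) (hWmeas : Measurable W)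
    (hW : P.map W = volume.withDensity
      (fun x => ENNReal.ofReal (betaPDF ((m : ℝ) / 2) (((d : ℝ) - (m : ℝ)) / 2) x)))
    (hIndRW : IndepFun R W P) :
    ∀ u : ℝ, 0 < u →
      (P {ω | lam 0 * R ω ^ 2 > u}).toReal = 1 - F (Real.sqrt (u / lam 0)) ∧
      (P {ω | eNorm (X ω) ^ 2 ≥ u}).toReal ≤ (P {ω | lam 0 * R ω ^ 2 > u}).toReal ∧
      (P {ω | lam 0 * R ω ^ 2 * W ω > u}).toReal ≤ (P {ω | eNorm (X ω) ^ 2 ≥ u}).toReal := by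
  obtain ⟨hH, σ, hσ⟩ := hlam
  have hle (i : Fin d) : hH.eigenvalues i ≤ lam 0 := by
    simpa [hσ] using hmono (Fin.zero_le (σ.symm i))
  have hcard : (Finset.univ.filter fun i ↦ hH.eigenvalues i = lam 0).card = m := by
    rw [hm]
    exact (Finset.card_equiv σ fun i ↦ by simp [hσ]).symm
  have hm0 : 0 < m := hm ▸ Finset.card_pos.2 ⟨0, by simp⟩
  obtain ⟨B, hB, hBlaw, hlower, hupper⟩ :=
    hU.exists_map_eq_betaMeasure_and_sq_eNorm_mulVec_bounds hH hle hcard hm0 hmd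
  have hBU : Measurable fun ω ↦ B (U ω) := hB.comp hU.1
  have hident : IdentDistrib W (fun ω ↦ B (U ω)) P P :=
    ⟨hWmeas.aemeasurable, hBU.aemeasurable, by rw [hW, hBlaw, withDensity_betaPDF]⟩
  have hXsq (ω : Ω) : eNorm (X ω) ^ 2 = R ω ^ 2 * eNorm (A *ᵥ U ω) ^ 2 := by
    rw [hX, mulVec_smul, sq_eNorm_smul]
  refine fun u _ ↦ ⟨by rw [hF]; exact toReal_measure_lt_mul_sq hRmeas hRpos hlam0 u,
    ENNReal.toReal_mono (measure_ne_top _ _) (measure_mono_ae (hupper.mono fun ω hω hu ↦ ?_)),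
    ENNReal.toReal_mono (measure_ne_top _ _) ((measure_lt_mul_sq_mul_congr hRmeas.aemeasurable
      hident hIndRW (hInd.comp measurable_id hB) _ u).trans_le (measure_mono fun ω hu ↦ ?_))⟩
  · calc u ≤ R ω ^ 2 * eNorm (A *ᵥ U ω) ^ 2 := hXsq ω ▸ hu
      _ < R ω ^ 2 * lam 0 := mul_lt_mul_of_pos_left hω (pow_pos (hRpos ω) 2)
      _ = lam 0 * R ω ^ 2 := mul_comm _ _
  · calc u ≤ R ω ^ 2 * (lam 0 * B (U ω)) := (hu.trans_eq (by ring)).le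
      _ ≤ R ω ^ 2 * eNorm (A *ᵥ U ω) ^ 2 := by gcongr; exact hlower _
      _ = eNorm (X ω) ^ 2 := (hXsq ω).symm
end
end
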